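/- Let M be an (A,c)-duplex and let I be an injective ℤ/2ℤ-graded A-submodule of M such that the differential d of M is injective on I and I ∩ d(I) = 0. Then M is isomorphic in the homotopy category K₂(A,c) to its quotient by the subduplex generated by I, namely to the duplex ⋯ → M⁰/(I⁰ ⊕ d(I¹)) → M¹/(I¹ ⊕ d(I⁰)) → ⋯ with the induced differential. -/

import Mathlib

/-!
Let `σ m = (-1)^|m| m`. Then `d ∘ σ` is `A`-linear, and by the hypotheses on `I` the map
`I × I → M`, `(x, y) ↦ x + d (σ y)` is injective, so the second projection `I × I → I` extends
along it to a linear map `H : M → I`. If `H₁` is the part of `H` of degree `1`, then `h = σ ∘ H₁` is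
a degree-`1` supercommuting map with values in `I` that vanishes on `I` and satisfies `h (d x) = x`
for `x ∈ I`. Hence `p = h d + d h` is a null-homotopic idempotent endomorphism of the duplex `M`
with image `I + d(I)`. For any null-homotopic idempotent `p`, the map `1 - p` factors through
`M / p(M)` and gives a homotopy inverse of the projection.
-/

/-!
STATEMENT 2: If M is an (A,c)-duplex and I an injective ℤ/2ℤ-graded A-submodule
of M such that d is injective on I and I ∩ d(I) = 0, then M is isomorphic in the
homotopy category K₂(A,c) to its quotient by the subduplex generated by I.
-/

universe u v

structure Duplex (A : Type u) [Ring A] (𝒜 : ZMod 2 → AddSubgroup A) (c : A) where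
  carrier : Type v
  [acg : AddCommGroup carrier]
  [mod : Module A carrier]
  grading : ZMod 2 → AddSubgroup carrier
  decomp : DirectSum.IsInternal grading
  smul_mem : ∀ {i j : ZMod 2} {a : A} {m : carrier},
    a ∈ 𝒜 i → m ∈ grading j → a • m ∈ grading (i + j)
  d : carrier →+ carrier
  d_degree : ∀ (i : ZMod 2), ∀ m ∈ grading i, d m ∈ grading (i + 1)
  d_sq : ∀ m : carrier, d (d m) = c • m
  d_supercomm : ∀ (i : ZMod 2) (a : A), a ∈ 𝒜 i → ∀ m : carrier,
    d (a • m) = ((-1 : ℤ) ^ i.val) • (a • d m)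

attribute [instance] Duplex.acg Duplex.mod

variable {A : Type u} [Ring A] {𝒜 : ZMod 2 → AddSubgroup A} {c : A}

def IsDuplexMorphism (M N : Duplex A 𝒜 c) (f : M.carrier →ₗ[A] N.carrier) : Prop :=
  (∀ i : ZMod 2, ∀ m ∈ M.grading i, f m ∈ N.grading i) ∧ ∀ m, f (M.d m) = N.d (f m)

def IsNullHomotopic (M N : Duplex A 𝒜 c) (f : M.carrier →ₗ[A] N.carrier) : Prop :=
  ∃ h : M.carrier →+ N.carrier,
    (∀ i : ZMod 2, ∀ m ∈ M.grading i, h m ∈ N.grading (i + 1)) ∧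
    (∀ (i : ZMod 2) (a : A), a ∈ 𝒜 i → ∀ m : M.carrier,
      h (a • m) = ((-1 : ℤ) ^ i.val) • (a • h m)) ∧
    (∀ m : M.carrier, f m = h (M.d m) + N.d (h m))

/-- Two duplexes are isomorphic in the homotopy category `K₂(A,c)` if there are
morphisms between them whose composites are homotopic to the identities. -/
def HomotopyIso (M N : Duplex A 𝒜 c) : Prop :=
  ∃ (f : M.carrier →ₗ[A] N.carrier) (g : N.carrier →ₗ[A] M.carrier),
    IsDuplexMorphism M N f ∧ IsDuplexMorphism N M g ∧
    IsNullHomotopic M M (g ∘ₗ f - LinearMap.id) ∧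
    IsNullHomotopic N N (f ∘ₗ g - LinearMap.id)

section GradedModule

variable {ι κ R M N : Type*} [DecidableEq ι] [DecidableEq κ]
variable [Ring R] [AddCommGroup M] [Module R M] [AddCommGroup N] [Module R N]

theorem isInternal_map_quotientMk (ℳ : ι → AddSubgroup M) [DirectSum.Decomposition ℳ]
    (K : AddSubgroup M) (hK : DirectSum.SetLike.IsHomogeneous ℳ K) :
    DirectSum.IsInternal fun i ↦ (ℳ i).map (QuotientAddGroup.mk' K) := by
  let π := QuotientAddGroup.mk' K
  let φ : M →+ DirectSum ι fun i ↦ (ℳ i).map π :=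
    (DirectSum.map fun i ↦ π.addSubgroupMap (ℳ i)).comp
      (DirectSum.decomposeAddEquiv ℳ).toAddMonoidHom
  have φ_apply (m : M) (i : ι) : ((φ m i : (ℳ i).map π) : M ⧸ K) = π (DirectSum.decompose ℳ m i) :=
    rfl
  have φ_ker (m : M) (hm : m ∈ K) : φ m = 0 :=
    DFinsupp.ext fun i ↦ Subtype.ext <|
      (φ_apply m i).trans <| (QuotientAddGroup.eq_zero_iff _).2 (hK i hm)
  have φ_of {i : ι} {m : M} (hm : m ∈ ℳ i) :
      φ m = DirectSum.of (fun i ↦ (ℳ i).map π) i ⟨π m, m, hm, rfl⟩ := by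
    simp only [φ, AddMonoidHom.comp_apply, AddEquiv.coe_toAddMonoidHom,
      DirectSum.decomposeAddEquiv_apply, DirectSum.decompose_of_mem ℳ hm, DirectSum.map_of]
    rfl
  let _ : DirectSum.Decomposition fun i ↦ (ℳ i).map π := by
    refine .ofAddHom _ (QuotientAddGroup.lift K φ φ_ker) ?_ ?_
    · refine QuotientAddGroup.addMonoidHom_ext _ (AddMonoidHom.ext fun m ↦ ?_)
      induction m using DirectSum.Decomposition.inductionOn ℳ with
      | zero => simp
      | homogeneous m =>
        change DirectSum.coeAddMonoidHom _ (φ m) = π m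
        rw [φ_of m.2, DirectSum.coeAddMonoidHom_of]
      | add m n hm hn => rw [map_add, hm, hn, map_add]
    · refine DirectSum.addHom_ext ?_
      rintro i ⟨_, m, hm, rfl⟩
      rw [AddMonoidHom.comp_apply, DirectSum.coeAddMonoidHom_of]
      exact φ_of hm
  exact DirectSum.Decomposition.isInternal _

theorem coe_decompose_map (ℳ : ι → AddSubgroup M) (𝒩 : κ → AddSubgroup N)
    [DirectSum.Decomposition ℳ] [DirectSum.Decomposition 𝒩] (f : M →+ N) {φ : ι → κ}
    (hφ : Function.Injective φ) (hf : ∀ i, ∀ m ∈ ℳ i, f m ∈ 𝒩 (φ i)) (i : ι) (m : M) :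
    (DirectSum.decompose 𝒩 (f m) (φ i) : N) = f (DirectSum.decompose ℳ m i) := by
  induction m using DirectSum.Decomposition.inductionOn ℳ with
  | zero => simp
  | @homogeneous j m =>
    obtain rfl | hij := eq_or_ne j i
    · rw [DirectSum.decompose_of_mem_same 𝒩 (hf j m m.2), DirectSum.decompose_of_mem_same ℳ m.2]
    · rw [DirectSum.decompose_of_mem_ne 𝒩 (hf j m m.2) (hφ.ne hij),
        DirectSum.decompose_of_mem_ne ℳ m.2 hij, map_zero]
  | add m n hm hn => simp [hm, hn]

theorem sum_coe_decompose [Fintype ι] (ℳ : ι → AddSubgroup M) [DirectSum.Decomposition ℳ] (m : M) :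
    ∑ i, (DirectSum.decompose ℳ m i : M) = m := by
  induction m using DirectSum.Decomposition.inductionOn ℳ with
  | zero => simp
  | @homogeneous j m =>
    rw [Finset.sum_eq_single_of_mem j (Finset.mem_univ j) fun i _ hij ↦
      DirectSum.decompose_of_mem_ne ℳ m.2 hij.symm, DirectSum.decompose_of_mem_same ℳ m.2]
  | add m n hm hn => simp [Finset.sum_add_distrib, hm, hn]

theorem map_smul_of_homogeneous (𝓡 : ι → AddSubgroup R) [DirectSum.Decomposition 𝓡] (f : M →+ N)
    (hf : ∀ i, ∀ r ∈ 𝓡 i, ∀ m, f (r • m) = r • f m) (r : R) (m : M) : f (r • m) = r • f m := by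
  induction r using DirectSum.Decomposition.inductionOn 𝓡 with
  | zero => simp
  | homogeneous r => exact hf _ r r.2 m
  | add r s hr hs => simp only [add_smul, map_add, hr, hs]

theorem coe_decompose_smul [Add ι] [IsLeftCancelAdd ι] {𝓡 : ι → AddSubgroup R}
    (ℳ : ι → AddSubgroup M) [DirectSum.Decomposition ℳ] [SetLike.GradedSMul 𝓡 ℳ] {j : ι} {r : R}
    (hr : r ∈ 𝓡 j) (i : ι) (m : M) :
    (DirectSum.decompose ℳ (r • m) (j + i) : M) = r • (DirectSum.decompose ℳ m i : M) :=
  coe_decompose_map ℳ ℳ (DistribSMul.toAddMonoidHom M r) (add_right_injective j)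
    (fun _ _ hm ↦ SetLike.GradedSMul.smul_mem hr hm) i m

section Component

variable [AddGroup ι] [Fintype ι] (𝓡 : ι → AddSubgroup R)
  (ℳ : ι → AddSubgroup M) (𝒩 : ι → AddSubgroup N)
  [DirectSum.Decomposition 𝓡] [DirectSum.Decomposition ℳ] [DirectSum.Decomposition 𝒩]
  [SetLike.GradedSMul 𝓡 ℳ] [SetLike.GradedSMul 𝓡 𝒩]

/-- The homogeneous component of degree `k` of a linear map between graded modules: the part of
`f` that sends degree `i` to degree `i + k` for every `i`. -/
def homogeneousComponent (f : M →ₗ[R] N) (k : ι) : M →ₗ[R] N :=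
  let F : M →+ N := AddMonoidHom.mk'
    (fun m ↦ ∑ i, (DirectSum.decompose 𝒩 (f (DirectSum.decompose ℳ m i)) (i + k) : N))
    (by simp [Finset.sum_add_distrib])
  have F_apply (m : M) : F m =
      ∑ i, (DirectSum.decompose 𝒩 (f (DirectSum.decompose ℳ m i)) (i + k) : N) := rfl
  { F with
    map_smul' := map_smul_of_homogeneous 𝓡 F fun j r hr m ↦ by
      rw [F_apply, F_apply, Finset.smul_sum, ← Equiv.sum_comp (Equiv.addLeft j)]
      refine Finset.sum_congr rfl fun i _ ↦ ?_
      rw [Equiv.coe_addLeft, coe_decompose_smul ℳ hr, map_smul, add_assoc,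
        coe_decompose_smul 𝒩 hr] }

theorem homogeneousComponent_apply (f : M →ₗ[R] N) (k : ι) (m : M) :
    homogeneousComponent 𝓡 ℳ 𝒩 f k m =
      ∑ i, (DirectSum.decompose 𝒩 (f (DirectSum.decompose ℳ m i)) (i + k) : N) :=
  rfl

theorem homogeneousComponent_of_mem (f : M →ₗ[R] N) (k : ι) {i : ι} {m : M} (hm : m ∈ ℳ i) :
    homogeneousComponent 𝓡 ℳ 𝒩 f k m = DirectSum.decompose 𝒩 (f m) (i + k) := by
  rw [homogeneousComponent_apply,
    Finset.sum_eq_single_of_mem i (Finset.mem_univ i) fun j _ hij ↦ ?_,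
    DirectSum.decompose_of_mem_same ℳ hm]
  simp [DirectSum.decompose_of_mem_ne ℳ hm hij.symm]

end Component

end GradedModule

theorem neg_one_pow_val_add : ∀ i j : ZMod 2,
    (-1 : ℤ) ^ (i + j).val = (-1) ^ i.val * (-1) ^ j.val := by
  decide

theorem neg_one_pow_mul_self (n : ℕ) : (-1 : ℤ) ^ n * (-1) ^ n = 1 :=
  pow_mul_pow_eq_one n (by norm_num)

section Parity

variable {R M : Type*} [Ring R] [AddCommGroup M] [Module R M]

theorem isHomogeneous_of_exists_add {ℳ : ZMod 2 → AddSubgroup M} [DirectSum.Decomposition ℳ]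
    {I : Submodule R M} (hI : ∀ x ∈ I, ∃ x₀ ∈ I, ∃ x₁ ∈ I, x₀ ∈ ℳ 0 ∧ x₁ ∈ ℳ 1 ∧ x = x₀ + x₁) :
    I.IsHomogeneous ℳ := by
  intro i x hx
  obtain ⟨x₀, hx₀, x₁, hx₁, h₀, h₁, rfl⟩ := hI x hx
  rw [DirectSum.decompose_add, DirectSum.add_apply, AddSubgroup.coe_add]
  obtain rfl | rfl : i = 0 ∨ i = 1 := by decide +revert
  · rwa [DirectSum.decompose_of_mem_same ℳ h₀, DirectSum.decompose_of_mem_ne ℳ h₁ one_ne_zero,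
      add_zero]
  · rwa [DirectSum.decompose_of_mem_same ℳ h₁, DirectSum.decompose_of_mem_ne ℳ h₀ zero_ne_one,
      zero_add]

/-- The parity involution `m ↦ (-1)^|m| m` of a `ℤ/2ℤ`-graded group. Composing with it exchanges
linear and supercommuting maps of degree `1`. -/
def parity (ℳ : ZMod 2 → AddSubgroup M) [DirectSum.Decomposition ℳ] : M →+ M :=
  AddMonoidHom.mk' (fun m ↦ ∑ i, (-1 : ℤ) ^ i.val • (DirectSum.decompose ℳ m i : M))
    (by simp [Finset.sum_add_distrib])

variable {𝓡 : ZMod 2 → AddSubgroup R} {ℳ : ZMod 2 → AddSubgroup M} [DirectSum.Decomposition ℳ]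

theorem parity_apply (m : M) :
    parity ℳ m = ∑ i, (-1 : ℤ) ^ i.val • (DirectSum.decompose ℳ m i : M) :=
  rfl

theorem parity_of_mem {i : ZMod 2} {m : M} (hm : m ∈ ℳ i) :
    parity ℳ m = (-1 : ℤ) ^ i.val • m := by
  rw [parity_apply, Finset.sum_eq_single_of_mem i (Finset.mem_univ i) fun j _ hij ↦ ?_,
    DirectSum.decompose_of_mem_same _ hm]
  rw [DirectSum.decompose_of_mem_ne _ hm hij.symm, smul_zero]

theorem parity_mem_grading {i : ZMod 2} {m : M} (hm : m ∈ ℳ i) : parity ℳ m ∈ ℳ i := by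
  rw [parity_of_mem hm]
  exact (ℳ i).zsmul_mem hm _

theorem parity_mem {I : Submodule R M} (hI : I.IsHomogeneous ℳ) {x : M} (hx : x ∈ I) :
    parity ℳ x ∈ I := by
  rw [parity_apply]
  exact I.sum_mem fun i _ ↦ zsmul_mem (hI i hx) _

theorem parity_parity (m : M) : parity ℳ (parity ℳ m) = m := by
  induction m using DirectSum.Decomposition.inductionOn ℳ with
  | zero => simp only [map_zero]
  | homogeneous m =>
    rw [parity_of_mem m.2, map_zsmul, parity_of_mem m.2, smul_smul, neg_one_pow_mul_self, one_smul]
  | add m n hm hn => simp only [map_add, hm, hn]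

theorem parity_smul [SetLike.GradedSMul 𝓡 ℳ] {i : ZMod 2} {r : R} (hr : r ∈ 𝓡 i) (m : M) :
    parity ℳ (r • m) = (-1 : ℤ) ^ i.val • r • parity ℳ m := by
  induction m using DirectSum.Decomposition.inductionOn ℳ with
  | zero => simp only [smul_zero, map_zero]
  | @homogeneous j m =>
    have hrm : r • (m : M) ∈ ℳ (i + j) := SetLike.GradedSMul.smul_mem hr m.2
    rw [parity_of_mem m.2, parity_of_mem hrm, neg_one_pow_val_add, mul_smul, smul_comm r]
  | add m n hm hn => simp only [smul_add, map_add, hm, hn]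

end Parity

section OddLinear

variable {R M N : Type*} [Ring R] [AddCommGroup M] [Module R M] [AddCommGroup N] [Module R N]

/-- The `R`-module maps of degree `1` between `ℤ/2ℤ`-graded modules: additive maps that raise the
degree by one and, following the sign rule, supercommute with homogeneous scalars. -/
structure IsOddLinear (𝓡 : ZMod 2 → AddSubgroup R) (ℳ : ZMod 2 → AddSubgroup M)
    (𝒩 : ZMod 2 → AddSubgroup N) (h : M →+ N) : Prop where
  map_mem : ∀ i, ∀ m ∈ ℳ i, h m ∈ 𝒩 (i + 1)
  map_smul : ∀ (i : ZMod 2) (r : R), r ∈ 𝓡 i → ∀ m, h (r • m) = (-1 : ℤ) ^ i.val • r • h m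

variable {𝓡 : ZMod 2 → AddSubgroup R} {ℳ : ZMod 2 → AddSubgroup M} {𝒩 : ZMod 2 → AddSubgroup N}

theorem isOddLinear_parity_comp [DirectSum.Decomposition 𝒩] [SetLike.GradedSMul 𝓡 𝒩] {f : M →ₗ[R] N}
    (hf : ∀ i, ∀ m ∈ ℳ i, f m ∈ 𝒩 (i + 1)) :
    IsOddLinear 𝓡 ℳ 𝒩 ((parity 𝒩).comp f.toAddMonoidHom) where
  map_mem i m hm := parity_mem_grading (hf i m hm)
  map_smul _ r hr m := (congrArg (parity 𝒩) (f.map_smul r m)).trans (parity_smul hr (f m))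

/-- The linear map obtained from a supercommuting map by precomposition with the parity
involution. -/
def IsOddLinear.compParity [DirectSum.Decomposition 𝓡] [DirectSum.Decomposition ℳ]
    [SetLike.GradedSMul 𝓡 ℳ] {h : M →+ N} (hh : IsOddLinear 𝓡 ℳ 𝒩 h) : M →ₗ[R] N :=
  { h.comp (parity ℳ) with
    map_smul' := map_smul_of_homogeneous 𝓡 (h.comp (parity ℳ)) fun i r hr m ↦ by
      rw [AddMonoidHom.comp_apply, AddMonoidHom.comp_apply, parity_smul hr, map_zsmul,
        hh.map_smul i r hr, smul_smul, neg_one_pow_mul_self, one_smul] }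

end OddLinear

namespace Duplex

noncomputable instance (M : Duplex A 𝒜 c) : DirectSum.Decomposition M.grading :=
  M.decomp.chooseDecomposition

instance (M : Duplex A 𝒜 c) : SetLike.GradedSMul 𝒜 M.grading :=
  ⟨fun _ _ _ _ ↦ M.smul_mem⟩

/-- A subduplex: a graded submodule stable under the differential. -/
structure IsSubduplex (M : Duplex A 𝒜 c) (J : Submodule A M.carrier) : Prop where
  isHomogeneous : J.IsHomogeneous M.grading
  d_mem : ∀ x ∈ J, M.d x ∈ J

theorem isSubduplex_range {M N : Duplex A 𝒜 c} {f : M.carrier →ₗ[A] N.carrier}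
    (hf : IsDuplexMorphism M N f) : N.IsSubduplex (LinearMap.range f) where
  isHomogeneous := by
    rintro i _ ⟨m, rfl⟩
    exact ⟨_, (coe_decompose_map M.grading N.grading f.toAddMonoidHom Function.injective_id
      hf.1 i m).symm⟩
  d_mem := by
    rintro _ ⟨m, rfl⟩
    exact ⟨M.d m, hf.2 m⟩

/-- The quotient of a duplex by a subduplex, graded by the images of the homogeneous parts. -/
def quotient (M : Duplex A 𝒜 c) {J : Submodule A M.carrier} (hJ : M.IsSubduplex J) :
    Duplex A 𝒜 c where
  carrier := M.carrier ⧸ J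
  grading i := (M.grading i).map J.mkQ.toAddMonoidHom
  decomp := isInternal_map_quotientMk M.grading J.toAddSubgroup hJ.isHomogeneous
  smul_mem := by
    rintro i j a _ ha ⟨m, hm, rfl⟩
    exact ⟨a • m, M.smul_mem ha hm, map_smul J.mkQ a m⟩
  d := QuotientAddGroup.map J.toAddSubgroup J.toAddSubgroup M.d hJ.d_mem
  d_degree := by
    rintro i _ ⟨m, hm, rfl⟩
    exact ⟨M.d m, M.d_degree i m hm, rfl⟩
  d_sq q := by
    obtain ⟨m, rfl⟩ := J.mkQ_surjective q
    exact congrArg J.mkQ (M.d_sq m)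
  d_supercomm i a ha q := by
    obtain ⟨m, rfl⟩ := J.mkQ_surjective q
    exact congrArg J.mkQ (M.d_supercomm i a ha m)

/-- The canonical projection onto the quotient duplex. -/
def quotientMk (M : Duplex A 𝒜 c) {J : Submodule A M.carrier} (hJ : M.IsSubduplex J) :
    M.carrier →ₗ[A] (M.quotient hJ).carrier :=
  J.mkQ

theorem isDuplexMorphism_quotientMk (M : Duplex A 𝒜 c) {J : Submodule A M.carrier}
    (hJ : M.IsSubduplex J) : IsDuplexMorphism M (M.quotient hJ) (M.quotientMk hJ) :=
  ⟨fun _ m hm ↦ ⟨m, hm, rfl⟩, fun _ ↦ rfl⟩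

theorem isOddLinear_d (M : Duplex A 𝒜 c) : IsOddLinear 𝒜 M.grading M.grading M.d :=
  ⟨M.d_degree, M.d_supercomm⟩

end Duplex

namespace IsOddLinear

variable [GradedRing 𝒜] {M N : Duplex A 𝒜 c} {h : M.carrier →+ N.carrier}

/-- The boundary `h d + d h` of a degree-`1` map `h`. -/
def boundary (hh : IsOddLinear 𝒜 M.grading N.grading h) : M.carrier →ₗ[A] N.carrier :=
  { h.comp M.d + N.d.comp h with
    map_smul' := map_smul_of_homogeneous 𝒜 (h.comp M.d + N.d.comp h) fun i a ha m ↦ by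
      simp only [AddMonoidHom.add_apply, AddMonoidHom.comp_apply, M.d_supercomm i a ha,
        N.d_supercomm i a ha, hh.map_smul i a ha, map_zsmul, smul_smul,
        neg_one_pow_mul_self, one_smul, smul_add] }

theorem boundary_apply (hh : IsOddLinear 𝒜 M.grading N.grading h) (m : M.carrier) :
    hh.boundary m = h (M.d m) + N.d (h m) :=
  rfl

theorem isNullHomotopic_boundary (hh : IsOddLinear 𝒜 M.grading N.grading h) :
    IsNullHomotopic M N hh.boundary :=
  ⟨h, hh.map_mem, hh.map_smul, hh.boundary_apply⟩

theorem isDuplexMorphism_boundary (hc : c ∈ 𝒜 0) (hh : IsOddLinear 𝒜 M.grading N.grading h) :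
    IsDuplexMorphism M N hh.boundary := by
  refine ⟨fun i m hm ↦ ?_, fun m ↦ ?_⟩
  · have hd := hh.map_mem _ _ (M.d_degree i m hm)
    have dh := N.d_degree _ _ (hh.map_mem i m hm)
    rw [CharTwo.add_cancel_right] at hd dh
    exact (N.grading i).add_mem hd dh
  · have hcm : h (c • m) = c • h m := by simpa using hh.map_smul 0 c hc m
    rw [hh.boundary_apply, hh.boundary_apply, M.d_sq, hcm, map_add, N.d_sq, add_comm]

end IsOddLinear

theorem isNullHomotopic_zero (M N : Duplex A 𝒜 c) : IsNullHomotopic M N 0 :=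
  ⟨0, fun _ _ _ ↦ zero_mem _, by simp, by simp⟩

theorem IsNullHomotopic.neg {M N : Duplex A 𝒜 c} {f : M.carrier →ₗ[A] N.carrier}
    (hf : IsNullHomotopic M N f) : IsNullHomotopic M N (-f) := by
  obtain ⟨h, hdeg, hsmul, hfh⟩ := hf
  refine ⟨-h, fun i m hm ↦ neg_mem (hdeg i m hm), fun i a ha m ↦ ?_, fun m ↦ ?_⟩
  · simp only [AddMonoidHom.neg_apply, hsmul i a ha, smul_neg]
  · simp only [LinearMap.neg_apply, AddMonoidHom.neg_apply, hfh, map_neg, neg_add]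

namespace Duplex

theorem exists_homotopyInverse_quotientMk_range {M : Duplex A 𝒜 c}
    {p : M.carrier →ₗ[A] M.carrier} (hp : IsDuplexMorphism M M p) (hpp : IsIdempotentElem p)
    (hp₀ : IsNullHomotopic M M p) :
    let Q := M.quotient (isSubduplex_range hp)
    let π := M.quotientMk (isSubduplex_range hp)
    ∃ g : Q.carrier →ₗ[A] M.carrier, IsDuplexMorphism Q M g ∧
      IsNullHomotopic M M (g ∘ₗ π - LinearMap.id) ∧
      IsNullHomotopic Q Q (π ∘ₗ g - LinearMap.id) := by
  intro Q π
  have range_le : LinearMap.range p ≤ LinearMap.ker (LinearMap.id - p) := by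
    rintro _ ⟨m, rfl⟩
    exact sub_eq_zero.2 (LinearMap.congr_fun hpp m).symm
  let g : Q.carrier →ₗ[A] M.carrier := (LinearMap.range p).liftQ (LinearMap.id - p) range_le
  have g_comp_π : g ∘ₗ π = LinearMap.id - p := (LinearMap.range p).liftQ_mkQ _ range_le
  have g_π (m : M.carrier) : g (π m) = m - p m := LinearMap.congr_fun g_comp_π m
  have π_comp_g : π ∘ₗ g = LinearMap.id := by
    ext q
    obtain ⟨m, rfl⟩ := (LinearMap.range p).mkQ_surjective q
    have π_p : π (p m) = 0 := (Submodule.Quotient.mk_eq_zero _).2 ⟨m, rfl⟩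
    change π (g (π m)) = π m
    rw [g_π, map_sub, π_p, sub_zero]
  refine ⟨g, ⟨?_, fun q ↦ ?_⟩, ?_, ?_⟩
  · rintro i _ ⟨m, hm, rfl⟩
    exact (g_π m).symm ▸ sub_mem hm (hp.1 i m hm)
  · obtain ⟨m, rfl⟩ := (LinearMap.range p).mkQ_surjective q
    change g (π (M.d m)) = M.d (g (π m))
    rw [g_π, g_π, hp.2, map_sub]
  · rw [g_comp_π, sub_sub_cancel_left]
    exact hp₀.neg
  · rw [π_comp_g, sub_self]
    exact isNullHomotopic_zero Q Q

/-- A partial inverse of the differential: a degree-`1` map with values in `I` that vanishes on `I`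
and undoes the differential there. Its boundary projects onto `I + d(I)`. -/
structure IsContraction {M : Duplex A 𝒜 c} (I : Submodule A M.carrier)
    (h : M.carrier →+ M.carrier) : Prop extends IsOddLinear 𝒜 M.grading M.grading h where
  apply_mem : ∀ m, h m ∈ I
  apply_eq_zero : ∀ x ∈ I, h x = 0
  apply_d : ∀ x ∈ I, h (M.d x) = x

namespace IsContraction

variable [GradedRing 𝒜] {M : Duplex A 𝒜 c} {I : Submodule A M.carrier}
  {h : M.carrier →+ M.carrier}

theorem boundary_add_d (hc : c ∈ 𝒜 0) (hh : IsContraction I h) {x y : M.carrier} (hx : x ∈ I)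
    (hy : y ∈ I) : hh.boundary (x + M.d y) = x + M.d y := by
  have boundary_eq_self {z : M.carrier} (hz : z ∈ I) : hh.boundary z = z := by
    rw [hh.boundary_apply, hh.apply_d z hz, hh.apply_eq_zero z hz, map_zero, add_zero]
  rw [map_add, (hh.isDuplexMorphism_boundary hc).2, boundary_eq_self hx, boundary_eq_self hy]

theorem isIdempotentElem_boundary (hc : c ∈ 𝒜 0) (hh : IsContraction I h) :
    IsIdempotentElem hh.boundary :=
  LinearMap.ext fun m ↦ hh.boundary_add_d hc (hh.apply_mem (M.d m)) (hh.apply_mem m)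

theorem mem_range_boundary_iff (hc : c ∈ 𝒜 0) (hh : IsContraction I h) {m : M.carrier} :
    m ∈ LinearMap.range hh.boundary ↔ ∃ x ∈ I, ∃ y ∈ I, m = x + M.d y := by
  constructor
  · rintro ⟨m, rfl⟩
    exact ⟨_, hh.apply_mem (M.d m), _, hh.apply_mem m, rfl⟩
  · rintro ⟨x, hx, y, hy, rfl⟩
    exact ⟨_, hh.boundary_add_d hc hx hy⟩

end IsContraction

section Injective

variable [GradedRing 𝒜] {M : Duplex.{u, v} A 𝒜 c} {I : Submodule A M.carrier}

theorem exists_extension_of_injective (hI : I.IsHomogeneous M.grading)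
    (hinj : Module.Injective A I) (hdinj : ∀ x ∈ I, M.d x = 0 → x = 0)
    (hd : ∀ x ∈ I, ∀ y ∈ I, x = M.d y → x = 0) :
    ∃ H : M.carrier →ₗ[A] I, (∀ x ∈ I, H x = 0) ∧
      ∀ x ∈ I, (H (M.d x) : M.carrier) = parity M.grading x := by
  let F : I × I →ₗ[A] M.carrier :=
    I.subtype.coprod (M.isOddLinear_d.compParity ∘ₗ I.subtype)
  have F_apply (x y : I) : F (x, y) = x + M.d (parity M.grading y) := rfl
  have F_injective : Function.Injective F := by
    rw [injective_iff_map_eq_zero]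
    rintro ⟨x, y⟩ hxy
    rw [F_apply] at hxy
    have hσy : parity M.grading y ∈ I := parity_mem hI y.2
    have hx : (x : M.carrier) = 0 := hd x x.2 (-parity M.grading y) (I.neg_mem hσy) <| by
      rw [map_neg, eq_neg_of_add_eq_zero_left hxy]
    have hy : (y : M.carrier) = 0 := by
      rw [← parity_parity (ℳ := M.grading) (y : M.carrier),
        hdinj _ hσy (by rwa [hx, zero_add] at hxy), map_zero]
    exact Prod.ext (Subtype.ext hx) (Subtype.ext hy)
  obtain ⟨H, hH⟩ := hinj.out F F_injective (LinearMap.snd A I I)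
  refine ⟨H, fun x hx ↦ ?_, fun x hx ↦ ?_⟩
  · simpa [F_apply] using hH (⟨x, hx⟩, 0)
  · simpa [F_apply, parity_parity] using
      congrArg Subtype.val (hH (0, ⟨parity M.grading x, parity_mem hI hx⟩))

theorem exists_isContraction (hI : I.IsHomogeneous M.grading)
    (hinj : Module.Injective A I) (hdinj : ∀ x ∈ I, M.d x = 0 → x = 0)
    (hd : ∀ x ∈ I, ∀ y ∈ I, x = M.d y → x = 0) :
    ∃ h : M.carrier →+ M.carrier, IsContraction I h := by
  obtain ⟨H, H_eq_zero, H_d⟩ := exists_extension_of_injective hI hinj hdinj hd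
  let H₁ := homogeneousComponent 𝒜 M.grading M.grading (I.subtype ∘ₗ H) 1
  have H₁_of_mem {i : ZMod 2} {m : M.carrier} (hm : m ∈ M.grading i) :
      H₁ m = DirectSum.decompose M.grading (H m : M.carrier) (i + 1) :=
    homogeneousComponent_of_mem 𝒜 M.grading M.grading _ 1 hm
  have H₁_degree (i : ZMod 2) (m : M.carrier) (hm : m ∈ M.grading i) :
      H₁ m ∈ M.grading (i + 1) :=
    H₁_of_mem hm ▸ SetLike.coe_mem _
  have H₁_mem (m : M.carrier) : H₁ m ∈ I := by
    rw [homogeneousComponent_apply]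
    exact I.sum_mem fun i _ ↦ hI _ (H _).2
  have H₁_d (x : M.carrier) (hx : x ∈ I) : H₁ (M.d x) = parity M.grading x := by
    rw [← sum_coe_decompose M.grading x, map_sum, map_sum, map_sum]
    refine Finset.sum_congr rfl fun i _ ↦ ?_
    have hxi := (DirectSum.decompose M.grading x i).2
    rw [H₁_of_mem (M.d_degree i _ hxi), H_d _ (hI i hx), CharTwo.add_cancel_right,
      DirectSum.decompose_of_mem_same _ (parity_mem_grading hxi)]
  refine ⟨(parity M.grading).comp H₁.toAddMonoidHom, isOddLinear_parity_comp H₁_degree,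
    fun m ↦ parity_mem hI (H₁_mem m), fun x hx ↦ ?_, fun x hx ↦ ?_⟩
  · have H₁_x : H₁ x = 0 := by
      rw [homogeneousComponent_apply]
      exact Finset.sum_eq_zero fun i _ ↦ by simp [H_eq_zero _ (hI i hx)]
    exact (congrArg (parity M.grading) H₁_x).trans (map_zero _)
  · exact (congrArg (parity M.grading) (H₁_d x hx)).trans (parity_parity x)

end Injective

end Duplex

open Duplex

/-- Let `M` be an `(A,c)`-duplex and `I` an injective ℤ/2ℤ-graded
`A`-submodule of `M` on which `d` is injective, with `I ∩ d(I) = 0`. Then `M` is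
isomorphic in `K₂(A,c)` to its quotient by the subduplex generated by `I`: there is
a duplex `Q` and a surjective morphism `π : M → Q` whose kernel is exactly
`I ⊕ d(I)` (graded by `I⁰ ⊕ d(I¹)` and `I¹ ⊕ d(I⁰)`), with the induced grading,
such that `π` is an isomorphism in the homotopy category. -/
theorem homotopyIso_quot_by_injective
    [GradedRing 𝒜] (hc : c ∈ 𝒜 0) (hc_central : ∀ a : A, c * a = a * c)
    (M : Duplex.{u, v} A 𝒜 c) (I : Submodule A M.carrier)
    -- `I` is a graded submodule of `M`
    (hgr : ∀ x ∈ I, ∃ x0 ∈ I, ∃ x1 ∈ I,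
      x0 ∈ M.grading 0 ∧ x1 ∈ M.grading 1 ∧ x = x0 + x1)
    -- `I` is an injective (ℤ/2ℤ-graded) `A`-module
    (hinj : Module.Injective A I)
    -- `d` is injective on `I`
    (hdinj : ∀ x ∈ I, M.d x = 0 → x = 0)
    -- `I ∩ d(I) = 0`
    (hd : ∀ x ∈ I, ∀ y ∈ I, x = M.d y → x = 0) :
    ∃ (Q : Duplex.{u, v} A 𝒜 c) (π : M.carrier →ₗ[A] Q.carrier),
      IsDuplexMorphism M Q π ∧
      Function.Surjective π ∧
      -- the kernel of `π` is the subduplex generated by `I`, namely `I + d(I)`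
      (∀ m : M.carrier, π m = 0 ↔ ∃ x ∈ I, ∃ y ∈ I, m = x + M.d y) ∧
      -- `Q` carries the quotient grading
      (∀ k : ZMod 2, ∀ q ∈ Q.grading k, ∃ m ∈ M.grading k, π m = q) ∧
      -- `π` becomes an isomorphism in the homotopy category
      (∃ g : Q.carrier →ₗ[A] M.carrier,
        IsDuplexMorphism Q M g ∧
        IsNullHomotopic M M (g ∘ₗ π - LinearMap.id) ∧
        IsNullHomotopic Q Q (π ∘ₗ g - LinearMap.id)) := by
  have hI := isHomogeneous_of_exists_add hgr
  obtain ⟨h, hh⟩ := exists_isContraction hI hinj hdinj hd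
  have hp := hh.isDuplexMorphism_boundary hc
  have hJ := isSubduplex_range hp
  refine ⟨M.quotient hJ, M.quotientMk hJ, M.isDuplexMorphism_quotientMk hJ,
    Submodule.mkQ_surjective _, fun m ↦ ?_, fun _ _ hq ↦ hq, ?_⟩
  · exact (Submodule.Quotient.mk_eq_zero _).trans (hh.mem_range_boundary_iff hc)
  · exact exists_homotopyInverse_quotientMk_range hp (hh.isIdempotentElem_boundary hc)
      hh.isNullHomotopic_boundary
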